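/- arXiv:2005.00601 — 2 statements merged into one kernel-verified Lean document; each statement's English description precedes it below -/
import Mathlib

section
/- Let k ≥ 1 be an integer and let ω = exp(2πi/k) ∈ ℂ. A complex n×n matrix A is a sum of finitely many (k+1)-potent matrices if and only if there exists a polynomial F with nonnegative integer coefficients and degree at most k−1 such that tr(A) = F(ω) and F(1) ≥ rank(A). -/
open Polynomial Matrix

section Rank

variable {n : Type*} [Fintype n]

theorem Matrix.rank_add_le_rank_add_rank (A B : Matrix n n ℂ) :
    (A + B).rank ≤ A.rank + B.rank := by
  rw [Matrix.rank, Matrix.rank, Matrix.rank, Matrix.mulVecLin_add]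
  refine (Submodule.finrank_mono (LinearMap.range_add_le _ _)).trans ?_
  exact Submodule.finrank_add_le_finrank_add_finrank _ _

theorem Matrix.rank_sum_le_sum_rank {ι : Type*} (s : Finset ι) (A : ι → Matrix n n ℂ) :
    (∑ i ∈ s, A i).rank ≤ ∑ i ∈ s, (A i).rank :=
  Finset.le_sum_of_subadditive _ Matrix.rank_zero.le Matrix.rank_add_le_rank_add_rank s A

/-- Wedderburn's rank reduction. -/
theorem Matrix.rank_sub_vecMulVec_lt (A : Matrix n n ℂ) (u v : n → ℂ)
    (h : v ⬝ᵥ (A *ᵥ u) = 1) :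
    (A - vecMulVec (A *ᵥ u) (v ᵥ* A)).rank < A.rank := by
  set B := A - vecMulVec (A *ᵥ u) (v ᵥ* A) with hB
  have hlt : LinearMap.ker A.mulVecLin < LinearMap.ker B.mulVecLin := by
    refine SetLike.lt_iff_le_and_exists.mpr ⟨fun x hx => ?_, u, ?_, fun hu => ?_⟩
    · simp only [LinearMap.mem_ker, Matrix.mulVecLin_apply] at hx ⊢
      simp [hB, Matrix.sub_mulVec, Matrix.vecMulVec_mulVec, ← Matrix.dotProduct_mulVec, hx]
    · simp [hB, Matrix.vecMulVec_mulVec, ← Matrix.dotProduct_mulVec, h]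
    · simp only [LinearMap.mem_ker, Matrix.mulVecLin_apply] at hu
      simp [hu] at h
  have h1 := Submodule.finrank_lt_finrank_of_lt hlt
  have h2 := LinearMap.finrank_range_add_finrank_ker A.mulVecLin
  have h3 := LinearMap.finrank_range_add_finrank_ker B.mulVecLin
  rw [Matrix.rank, Matrix.rank]
  omega

variable [DecidableEq n]

theorem Matrix.rank_smul_le_rank (c : ℂ) (A : Matrix n n ℂ) : (c • A).rank ≤ A.rank := by
  simpa using Matrix.rank_mul_le_right (c • (1 : Matrix n n ℂ)) A

theorem Matrix.trace_eq_rank_of_isIdempotentElem {P : Matrix n n ℂ} (hP : P * P = P) :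
    P.trace = P.rank := by
  have h : IsIdempotentElem P.toLin' := by
    rw [IsIdempotentElem, Module.End.mul_eq_comp, ← Matrix.toLin'_mul, hP]
  have := ((LinearMap.isProj_range_iff_isIdempotentElem _).mpr h).trace
  rw [← Matrix.trace_toLin'_eq, this]
  rfl

end Rank

section LocalDependence

variable {n : Type*} [Fintype n]

theorem Matrix.eq_of_forall_dotProduct_mulVec {A B : Matrix n n ℂ}
    (h : ∀ u v : n → ℂ, v ⬝ᵥ (A *ᵥ u) = v ⬝ᵥ (B *ᵥ u)) : A = B := by
  classical
  exact Matrix.ext_of_mulVec_single fun i =>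
    dotProduct_eq _ _ fun v => by rw [dotProduct_comm, h, dotProduct_comm]

theorem Matrix.exists_dotProduct_mulVec_ne_zero {A : Matrix n n ℂ} (hA : A ≠ 0) :
    ∃ u v : n → ℂ, v ⬝ᵥ (A *ᵥ u) ≠ 0 := by
  by_contra! h
  exact hA (Matrix.eq_of_forall_dotProduct_mulVec fun u v => by simp [h])

theorem Matrix.eq_zero_of_rank_eq_zero {A : Matrix n n ℂ} (h : A.rank = 0) : A = 0 := by
  by_contra hA
  obtain ⟨u, v, huv⟩ := Matrix.exists_dotProduct_mulVec_ne_zero hA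
  have := A.rank_sub_vecMulVec_lt ((v ⬝ᵥ (A *ᵥ u))⁻¹ • u) v (by simp [mulVec_smul, huv])
  omega

/-- If the bilinear form of `A` vanishes wherever that of `B ≠ 0` does, then `A` is a multiple
of `B`. -/
theorem Matrix.exists_eq_smul_of_dotProduct_mulVec_eq_zero {A B : Matrix n n ℂ} (hB : B ≠ 0)
    (h : ∀ u v : n → ℂ, v ⬝ᵥ (B *ᵥ u) = 0 → v ⬝ᵥ (A *ᵥ u) = 0) : ∃ c : ℂ, A = c • B := by
  obtain ⟨u₀, v₁, h₁⟩ := Matrix.exists_dotProduct_mulVec_ne_zero hB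
  obtain ⟨v₀, h₀⟩ : ∃ v₀ : n → ℂ, v₀ ⬝ᵥ (B *ᵥ u₀) = 1 :=
    ⟨(v₁ ⬝ᵥ (B *ᵥ u₀))⁻¹ • v₁, by simp [h₁]⟩
  refine ⟨v₀ ⬝ᵥ (A *ᵥ u₀), Matrix.eq_of_forall_dotProduct_mulVec fun u v => ?_⟩
  have hl := h u₀ (v - (v ⬝ᵥ (B *ᵥ u₀)) • v₀) (by simp [sub_dotProduct, h₀])
  have hr := h (u - (v₀ ⬝ᵥ (B *ᵥ u)) • u₀) v₀
    (by simp [dotProduct_sub, mulVec_sub, mulVec_smul, h₀])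
  have key := h (u - (v ⬝ᵥ (B *ᵥ u) + (1 - v ⬝ᵥ (B *ᵥ u₀)) * (v₀ ⬝ᵥ (B *ᵥ u))) • u₀)
    (v + (1 - v ⬝ᵥ (B *ᵥ u₀)) • v₀) (by
      simp only [add_dotProduct, dotProduct_sub, mulVec_sub, mulVec_smul, smul_dotProduct,
        dotProduct_smul, smul_eq_mul, h₀]
      ring)
  simp only [sub_dotProduct, add_dotProduct, dotProduct_sub, mulVec_sub, mulVec_smul,
    smul_dotProduct, dotProduct_smul, smul_eq_mul, smul_mulVec] at hl hr key ⊢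
  linear_combination key +
    (v ⬝ᵥ (B *ᵥ u) + (1 - v ⬝ᵥ (B *ᵥ u₀)) * (v₀ ⬝ᵥ (B *ᵥ u))) * hl -
    (1 - v ⬝ᵥ (B *ᵥ u₀)) * hr

end LocalDependence

section Potent

variable {n : Type*} [Fintype n] [DecidableEq n]

/-- The additive monoid of finite sums of `(k + 1)`-potent matrices. -/
def potentSums (n : Type*) [Fintype n] [DecidableEq n] (k : ℕ) :
    AddSubmonoid (Matrix n n ℂ) :=
  AddSubmonoid.closure {E | E ^ (k + 1) = E}

theorem mem_potentSums_iff {k : ℕ} {A : Matrix n n ℂ} :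
    A ∈ potentSums n k ↔
      ∃ (m : ℕ) (E : Fin m → Matrix n n ℂ), (∀ i, E i ^ (k + 1) = E i) ∧ A = ∑ i, E i := by
  constructor
  · intro h
    obtain ⟨l, hl, rfl⟩ := AddSubmonoid.exists_list_of_mem_closure h
    exact ⟨l.length, l.get, fun i => hl _ (l.get_mem i), by simp [← List.sum_ofFn]⟩
  · rintro ⟨m, E, hE, rfl⟩
    exact AddSubmonoid.sum_mem _ fun i _ => AddSubmonoid.subset_closure (hE i)

theorem vecMulVec_pow_succ (x y : n → ℂ) (m : ℕ) :
    vecMulVec x y ^ (m + 1) = (y ⬝ᵥ x) ^ m • vecMulVec x y := by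
  induction m with
  | zero => simp
  | succ m ih =>
    rw [pow_succ, ih, smul_mul_assoc, vecMulVec_mul_vecMulVec, vecMulVec_smul, smul_smul, pow_succ]

theorem vecMulVec_mem_potentSums {k : ℕ} {x y : n → ℂ} (h : (y ⬝ᵥ x) ^ k = 1) :
    vecMulVec x y ∈ potentSums n k :=
  AddSubmonoid.subset_closure (by simp [vecMulVec_pow_succ, h])

theorem exists_dotProduct_eq_one {x : n → ℂ} (hx : x ≠ 0) : ∃ z : n → ℂ, z ⬝ᵥ x = 1 := by
  obtain ⟨i, hi⟩ := Function.ne_iff.mp hx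
  exact ⟨Pi.single i (x i)⁻¹, by simpa using inv_mul_cancel₀ hi⟩

theorem smul_vecMulVec_mem_potentSums {k : ℕ} {x y : n → ℂ} {c : ℂ} (hc : c ^ k = 1)
    (h : y ⬝ᵥ x = 1) : c • vecMulVec x y ∈ potentSums n k := by
  rw [← vecMulVec_smul]
  exact vecMulVec_mem_potentSums (by simp [h, hc])

theorem neg_vecMulVec_mem_potentSums {k : ℕ} (hk : 2 ≤ k) {ω : ℂ} (hω : IsPrimitiveRoot ω k)
    {x y : n → ℂ} (h : y ⬝ᵥ x = 1) : -vecMulVec x y ∈ potentSums n k := by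
  have hsum : ∑ j ∈ Finset.range (k - 1), ω ^ (j + 1) = -1 := by
    have := hω.geom_sum_eq_zero (by omega)
    rw [show k = k - 1 + 1 by omega, Finset.sum_range_succ'] at this
    linear_combination this
  rw [← neg_one_smul ℂ, ← hsum, Finset.sum_smul]
  refine AddSubmonoid.sum_mem _ fun j _ => smul_vecMulVec_mem_potentSums ?_ h
  rw [← pow_mul, mul_comm, pow_mul, hω.pow_eq_one, one_pow]

theorem vecMulVec_mem_potentSums_of_dotProduct_eq_zero {k : ℕ} (hk : 2 ≤ k) {ω : ℂ}
    (hω : IsPrimitiveRoot ω k) {x y : n → ℂ} (h : y ⬝ᵥ x = 0) :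
    vecMulVec x y ∈ potentSums n k := by
  rcases eq_or_ne x 0 with rfl | hx
  · simp
  obtain ⟨z, hz⟩ := exists_dotProduct_eq_one hx
  have : vecMulVec x y = vecMulVec x (z + y) + -vecMulVec x z := by
    rw [vecMulVec_add]; abel
  rw [this]
  exact add_mem (vecMulVec_mem_potentSums (by simp [add_dotProduct, hz, h]))
    (neg_vecMulVec_mem_potentSums hk hω hz)

theorem sum_vecMulVec_single_row (A : Matrix n n ℂ) :
    ∑ i, vecMulVec (Pi.single i 1) (A i) = A := by
  ext a b
  simp [Matrix.sum_apply, vecMulVec_apply, Pi.single_apply]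

theorem vecMulVec_single_sub_mem_potentSums {k : ℕ} (hk : 2 ≤ k) {ω : ℂ}
    (hω : IsPrimitiveRoot ω k) (i i₀ : n) (r : n → ℂ) :
    vecMulVec (Pi.single i 1) r - r i • vecMulVec (Pi.single i₀ 1) (Pi.single i₀ 1) ∈
      potentSums n k := by
  have nil {x y : n → ℂ} (h : y ⬝ᵥ x = 0) :=
    vecMulVec_mem_potentSums_of_dotProduct_eq_zero hk hω h
  have hrow : vecMulVec (Pi.single i 1) (r - r i • Pi.single i 1) ∈ potentSums n k :=
    nil (by simp)
  rcases eq_or_ne i i₀ with rfl | hi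
  · rwa [vecMulVec_sub, vecMulVec_smul] at hrow
  have h₁ : vecMulVec (Pi.single i 1 + Pi.single i₀ 1)
      (r i • (Pi.single i 1 - Pi.single i₀ 1)) ∈ potentSums n k :=
    nil (by simp [hi, hi.symm])
  have h₂ : vecMulVec (Pi.single i 1) (r i • Pi.single i₀ 1) ∈ potentSums n k :=
    nil (by simp [hi])
  have h₃ : vecMulVec (Pi.single i₀ 1) (-r i • Pi.single i 1) ∈ potentSums n k :=
    nil (by simp [hi.symm])
  convert add_mem (add_mem (add_mem hrow h₁) h₂) h₃ using 1
  simp only [vecMulVec_sub, vecMulVec_smul, add_vecMulVec]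
  module

theorem mem_potentSums_of_two_le {k : ℕ} (hk : 2 ≤ k) {ω : ℂ} (hω : IsPrimitiveRoot ω k)
    {A : Matrix n n ℂ} {F : ℕ[X]} (hF : A.trace = aeval ω F) : A ∈ potentSums n k := by
  cases isEmpty_or_nonempty n
  · rw [Subsingleton.elim A 0]
    exact zero_mem _
  obtain ⟨i₀⟩ := ‹Nonempty n›
  set e := vecMulVec (Pi.single i₀ (1 : ℂ)) (Pi.single i₀ (1 : ℂ)) with he
  have htr : A.trace • e ∈ potentSums n k := by
    rw [hF, aeval_eq_sum_range, Finset.sum_smul]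
    refine AddSubmonoid.sum_mem _ fun j _ => ?_
    rw [smul_assoc]
    refine nsmul_mem (smul_vecMulVec_mem_potentSums ?_ (by simp)) _
    rw [← pow_mul, mul_comm, pow_mul, hω.pow_eq_one, one_pow]
  have hsum : ∑ i, (vecMulVec (Pi.single i 1) (A i) - A i i • e) ∈ potentSums n k :=
    AddSubmonoid.sum_mem _ fun i _ => vecMulVec_single_sub_mem_potentSums hk hω i i₀ (A i)
  rw [Finset.sum_sub_distrib, sum_vecMulVec_single_row, ← Finset.sum_smul] at hsum
  simpa [Matrix.trace] using add_mem hsum htr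

/-- A matrix whose trace equals its rank and whose square is a multiple of itself is idempotent. -/
theorem mul_self_eq_of_mul_self_eq_smul {A : Matrix n n ℂ} (htr : A.trace = A.rank) {d : ℂ}
    (hd : A * A = d • A) : A * A = A := by
  rcases eq_or_ne A.rank 0 with hr | hr
  · simp [Matrix.eq_zero_of_rank_eq_zero hr]
  have hr' : (A.rank : ℂ) ≠ 0 := by exact_mod_cast hr
  rcases eq_or_ne d 0 with rfl | hd0
  · have hnil : IsNilpotent A := ⟨2, by rw [pow_two, hd, zero_smul]⟩
    have := (Matrix.isNilpotent_trace_of_isNilpotent hnil).eq_zero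
    exact absurd (htr.symm.trans this) hr'
  have hid : (d⁻¹ • A) * (d⁻¹ • A) = d⁻¹ • A := by
    rw [smul_mul_smul_comm, hd, smul_smul, mul_assoc, inv_mul_cancel₀ hd0, mul_one]
  have hrank : (d⁻¹ • A).rank = A.rank := by
    refine le_antisymm (Matrix.rank_smul_le_rank _ _) ?_
    simpa [smul_smul, hd0] using Matrix.rank_smul_le_rank d (d⁻¹ • A)
  have := Matrix.trace_eq_rank_of_isIdempotentElem hid
  rw [hrank, Matrix.trace_smul, htr, smul_eq_mul] at this
  have hd1 : d⁻¹ = 1 := mul_right_cancel₀ hr' (by rw [this, one_mul])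
  rw [hd, inv_eq_one.mp hd1, one_smul]

theorem mem_potentSums_one {N : ℕ} : ∀ {A : Matrix n n ℂ}, A.trace = N → A.rank ≤ N →
    A ∈ potentSums n 1 := by
  induction N with
  | zero =>
    intro A _ hr
    rw [Matrix.eq_zero_of_rank_eq_zero (Nat.le_zero.mp hr)]
    exact zero_mem _
  | succ N ih =>
    intro A htr hr
    have step {x y : n → ℂ} (hxy : y ⬝ᵥ x = 1) (h : (A - vecMulVec x y).rank ≤ N) :
        A ∈ potentSums n 1 := by
      rw [← sub_add_cancel A (vecMulVec x y)]
      refine add_mem (ih ?_ h) (vecMulVec_mem_potentSums (by simp [hxy]))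
      rw [Matrix.trace_sub, trace_vecMulVec, dotProduct_comm, hxy, htr]
      simp
    have hA : A ≠ 0 := by
      rintro rfl
      rw [Matrix.trace_zero] at htr
      exact Nat.cast_ne_zero.mpr N.succ_ne_zero htr.symm
    rcases hr.lt_or_eq with hlt | heq
    · obtain ⟨u, v, huv⟩ := Matrix.exists_dotProduct_mulVec_ne_zero hA
      obtain ⟨y, hy⟩ : ∃ y, y ⬝ᵥ (A *ᵥ u) = 1 := exists_dotProduct_eq_one fun h0 => by
        simp [h0] at huv
      refine step hy ?_
      have : A - vecMulVec (A *ᵥ u) y = A * (1 - vecMulVec u y) := by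
        rw [mul_sub, mul_one, mul_vecMulVec]
      rw [this]
      exact (Matrix.rank_mul_le_left _ _).trans (Nat.lt_succ_iff.mp hlt)
    by_cases hid : A * A = A
    · exact AddSubmonoid.subset_closure (by simpa [pow_two] using hid)
    obtain ⟨u, v, hB, hAuv⟩ : ∃ u v : n → ℂ,
        v ⬝ᵥ ((A - A * A) *ᵥ u) = 0 ∧ v ⬝ᵥ (A *ᵥ u) ≠ 0 := by
      by_contra! h
      obtain ⟨c, hc⟩ := Matrix.exists_eq_smul_of_dotProduct_mulVec_eq_zero
        (sub_ne_zero.mpr (Ne.symm hid)) h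
      have hc0 : c ≠ 0 := by
        rintro rfl
        exact hA (by simpa using hc)
      refine hid (mul_self_eq_of_mul_self_eq_smul (d := 1 - c⁻¹) (by rw [htr, heq]) ?_)
      have : c⁻¹ • A = A - A * A := by
        conv_lhs => rw [hc]
        rw [smul_smul, inv_mul_cancel₀ hc0, one_smul]
      rw [sub_smul, this, one_smul, sub_sub_cancel]
    set w := (v ⬝ᵥ (A *ᵥ u))⁻¹ • u with hw
    have hvw : v ⬝ᵥ (A *ᵥ w) = 1 := by simp [hw, mulVec_smul, hAuv]
    have hvw' : (v ᵥ* A) ⬝ᵥ (A *ᵥ w) = 1 := by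
      rw [sub_mulVec, dotProduct_sub, sub_eq_zero] at hB
      rw [← dotProduct_mulVec, mulVec_mulVec, hw, mulVec_smul, dotProduct_smul, ← hB]
      simp [hAuv]
    refine step hvw' ?_
    have := A.rank_sub_vecMulVec_lt w v hvw
    omega

end Potent

section Forward

variable {n : Type*} [Fintype n] [DecidableEq n]

/-- The component of `E` on the eigenspace for `ω ^ j`, as a polynomial in `E`. -/
noncomputable def eigencomponent (k : ℕ) (ω : ℂ) (E : Matrix n n ℂ) (j : ℕ) : Matrix n n ℂ :=
  (k : ℂ)⁻¹ • ∑ m ∈ Finset.range k, (ω⁻¹ ^ j) ^ (m + 1) • E ^ (m + 1)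

theorem mul_eigencomponent {k : ℕ} {ω : ℂ} (hω : ω ^ k = 1) (hω0 : ω ≠ 0)
    {E : Matrix n n ℂ} (hE : E ^ (k + 1) = E) (j : ℕ) :
    E * eigencomponent k ω E j = ω ^ j • eigencomponent k ω E j := by
  have hηk : (ω⁻¹ ^ j) ^ k = 1 := by
    rw [← pow_mul, mul_comm, pow_mul, inv_pow, hω, inv_one, one_pow]
  have hη : ω ^ j * ω⁻¹ ^ j = 1 := by rw [← mul_pow, mul_inv_cancel₀ hω0, one_pow]
  have hshift : ∑ m ∈ Finset.range k, (ω⁻¹ ^ j) ^ (m + 1) • E ^ (m + 1) =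
      ∑ m ∈ Finset.range k, (ω⁻¹ ^ j) ^ (m + 1 + 1) • E ^ (m + 1 + 1) := by
    have h₁ := Finset.sum_range_succ (fun m => (ω⁻¹ ^ j) ^ (m + 1) • E ^ (m + 1)) k
    have h₂ := Finset.sum_range_succ' (fun m => (ω⁻¹ ^ j) ^ (m + 1) • E ^ (m + 1)) k
    rw [h₁, hE, pow_succ _ k, hηk] at h₂
    simpa using h₂
  rw [eigencomponent, mul_smul_comm, smul_comm]
  congr 1
  conv_rhs => rw [hshift]
  rw [Finset.mul_sum, Finset.smul_sum]
  refine Finset.sum_congr rfl fun m _ => ?_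
  rw [mul_smul_comm, ← pow_succ', smul_smul, pow_succ' (ω⁻¹ ^ j) (m + 1), ← mul_assoc, hη, one_mul]

theorem eigencomponent_mul_self {k : ℕ} (hk : k ≠ 0) {ω : ℂ} (hω : ω ^ k = 1) (hω0 : ω ≠ 0)
    {E : Matrix n n ℂ} (hE : E ^ (k + 1) = E) (j : ℕ) :
    eigencomponent k ω E j * eigencomponent k ω E j = eigencomponent k ω E j := by
  have hη : ω⁻¹ ^ j * ω ^ j = 1 := by rw [← mul_pow, inv_mul_cancel₀ hω0, one_pow]
  have hpow (m : ℕ) : E ^ m * eigencomponent k ω E j =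
      (ω ^ j) ^ m • eigencomponent k ω E j := by
    induction m with
    | zero => simp
    | succ m ih =>
      rw [pow_succ, mul_assoc, mul_eigencomponent hω hω0 hE, mul_smul_comm, ih, smul_smul,
        pow_succ']
  set P := eigencomponent k ω E j with hP
  conv_lhs => enter [1]; rw [hP, eigencomponent]
  rw [smul_mul_assoc, Finset.sum_mul]
  have : ∀ m ∈ Finset.range k, ((ω⁻¹ ^ j) ^ (m + 1) • E ^ (m + 1)) * P = P := fun m _ => by
    rw [smul_mul_assoc, hpow, smul_smul, ← mul_pow, hη, one_pow, one_smul]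
  rw [Finset.sum_congr rfl this, Finset.sum_const, Finset.card_range, ← Nat.cast_smul_eq_nsmul ℂ,
    smul_smul, inv_mul_cancel₀ (Nat.cast_ne_zero.mpr hk), one_smul]

theorem sum_smul_eigencomponent {k : ℕ} (hk : k ≠ 0) {ω : ℂ} (hω : IsPrimitiveRoot ω k)
    (E : Matrix n n ℂ) :
    ∑ j ∈ Finset.range k, ω ^ j • eigencomponent k ω E j = E := by
  have hω0 : ω ≠ 0 := hω.ne_zero hk
  have hcoef (j m : ℕ) : ω ^ j * (ω⁻¹ ^ j) ^ (m + 1) = (ω⁻¹ ^ m) ^ j := by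
    rw [pow_succ, mul_left_comm, ← mul_pow ω, mul_inv_cancel₀ hω0, one_pow, mul_one, pow_right_comm]
  have hgeom (m : ℕ) (hm : m ∈ Finset.range k) (hm0 : m ≠ 0) :
      ∑ j ∈ Finset.range k, (ω⁻¹ ^ m) ^ j = 0 := by
    have hne : ω⁻¹ ^ m ≠ 1 :=
      hω.inv.pow_ne_one_of_pos_of_lt hm0 (Finset.mem_range.mp hm)
    rw [geom_sum_eq hne, ← pow_mul, mul_comm, pow_mul, inv_pow, hω.pow_eq_one]
    simp
  simp only [eigencomponent, Finset.smul_sum, smul_smul, mul_left_comm _ (k : ℂ)⁻¹, hcoef]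
  rw [Finset.sum_comm]
  simp only [← Finset.sum_smul, ← Finset.mul_sum]
  rw [Finset.sum_eq_single_of_mem 0 (Finset.mem_range.mpr (Nat.pos_of_ne_zero hk))
    fun m hm hm0 => by rw [hgeom m hm hm0, mul_zero, zero_smul]]
  simp [hk]

theorem exists_polynomial_of_potent {k : ℕ} (hk : k ≠ 0) {ω : ℂ} (hω : IsPrimitiveRoot ω k)
    {E : Matrix n n ℂ} (hE : E ^ (k + 1) = E) :
    ∃ F : ℕ[X], F.natDegree ≤ k - 1 ∧ E.trace = aeval ω F ∧ E.rank ≤ F.eval 1 := by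
  refine ⟨∑ j ∈ Finset.range k, C (eigencomponent k ω E j).rank * X ^ j, ?_, ?_, ?_⟩
  · refine natDegree_sum_le_of_forall_le _ _ fun j hj => ?_
    have := Finset.mem_range.mp hj
    exact (natDegree_C_mul_X_pow_le _ _).trans (by omega)
  · conv_lhs => rw [← sum_smul_eigencomponent hk hω E]
    rw [Matrix.trace_sum, map_sum]
    refine Finset.sum_congr rfl fun j _ => ?_
    rw [Matrix.trace_smul, Matrix.trace_eq_rank_of_isIdempotentElem
      (eigencomponent_mul_self hk hω.pow_eq_one (hω.ne_zero hk) hE j)]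
    simp [mul_comm]
  · conv_lhs => rw [← sum_smul_eigencomponent hk hω E]
    refine (Matrix.rank_sum_le_sum_rank _ _).trans ?_
    rw [eval_finsetSum]
    exact Finset.sum_le_sum fun j _ => by simpa using Matrix.rank_smul_le_rank _ _

theorem exists_polynomial_of_mem_potentSums {k : ℕ} (hk : k ≠ 0) {ω : ℂ}
    (hω : IsPrimitiveRoot ω k) {A : Matrix n n ℂ} (hA : A ∈ potentSums n k) :
    ∃ F : ℕ[X], F.natDegree ≤ k - 1 ∧ A.trace = aeval ω F ∧ A.rank ≤ F.eval 1 := by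
  induction hA using AddSubmonoid.closure_induction with
  | mem E hE => exact exists_polynomial_of_potent hk hω hE
  | zero => exact ⟨0, by simp⟩
  | add A B _ _ hA hB =>
    obtain ⟨F, hF, hFtr, hFr⟩ := hA
    obtain ⟨G, hG, hGtr, hGr⟩ := hB
    refine ⟨F + G, natDegree_add_le_of_degree_le hF hG, ?_, ?_⟩
    · rw [Matrix.trace_add, map_add, hFtr, hGtr]
    · rw [eval_add]
      exact (Matrix.rank_add_le_rank_add_rank A B).trans (add_le_add hFr hGr)

end Forward

theorem sum_of_kpotent_iff (k n : ℕ) (hk : 1 ≤ k)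
    (ω : ℂ) (hω : ω = Complex.exp (2 * Real.pi * Complex.I / k))
    (A : Matrix (Fin n) (Fin n) ℂ) :
    (∃ (m : ℕ) (E : Fin m → Matrix (Fin n) (Fin n) ℂ),
        (∀ i, E i ^ (k + 1) = E i) ∧ A = ∑ i, E i) ↔
    (∃ F : Polynomial ℕ, F.natDegree ≤ k - 1 ∧
        A.trace = Polynomial.aeval ω F ∧ A.rank ≤ F.eval 1) := by
  have hprim : IsPrimitiveRoot ω k := hω ▸ Complex.isPrimitiveRoot_exp k (by omega)
  rw [← mem_potentSums_iff]
  refine ⟨exists_polynomial_of_mem_potentSums (by omega) hprim, ?_⟩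
  rintro ⟨F, -, htr, hr⟩
  rcases hk.eq_or_lt with rfl | hk
  · rw [IsPrimitiveRoot.one_right_iff.mp hprim] at htr
    refine mem_potentSums_one (htr.trans ?_) hr
    simpa using aeval_algebraMap_apply ℂ (1 : ℕ) F
  · exact mem_potentSums_of_two_le hk hprim htr
end

section
/- Let F be a field of characteristic different from 2, let k ≥ 2 be an integer, let ω ∈ F satisfy ω^k = 1 and ω ≠ 1, and let A be an n×n matrix over F. Then the 2n×2n block-diagonal matrix (ωI + A) ⊕ (ωI − A) is a sum of two (k+1)-potent matrices over F. -/
open Matrix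

/-- The block matrix with diagonal `b, 1 - b` and off-diagonal entries `c b (1 - b)`, `c`
is idempotent as soon as `c ^ 2 = 1`. -/
theorem isIdempotentElem_fromBlocks {F m : Type*} [Field F] [Fintype m] [DecidableEq m]
    (c : F) (hc : c * c = 1) (b : Matrix m m F) :
    IsIdempotentElem (fromBlocks b (c • (b * (1 - b))) (c • (1 : Matrix m m F)) (1 - b)) := by
  unfold IsIdempotentElem
  rw [fromBlocks_multiply]
  congr 1
  · simp only [smul_mul_smul_comm, hc, one_smul]
    noncomm_ring
  · simp only [mul_smul_comm, smul_mul_assoc, ← smul_add]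
    congr 1
    noncomm_ring
  · simp only [mul_smul_comm, smul_mul_assoc, ← smul_add]
    congr 1
    noncomm_ring
  · simp only [smul_mul_smul_comm, hc, one_smul]
    noncomm_ring

theorem IsIdempotentElem.smul_pow_succ {F R : Type*} [Field F] [Ring R] [Algebra F R]
    {p : R} (hp : IsIdempotentElem p) {ω : F} {k : ℕ} (hω : ω ^ k = 1) :
    (ω • p) ^ (k + 1) = ω • p := by
  rw [smul_pow, hp.pow_succ_eq, pow_succ, hω, one_mul]

theorem block_diag_sum_two_kpotent {F : Type*} [Field F] (hchar : (2 : F) ≠ 0)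
    (k n : ℕ) (hk : 2 ≤ k) (ω : F) (hω : ω ^ k = 1) (hω1 : ω ≠ 1)
    (A : Matrix (Fin n) (Fin n) F) :
    ∃ B C : Matrix (Fin n ⊕ Fin n) (Fin n ⊕ Fin n) F,
      B ^ (k + 1) = B ∧ C ^ (k + 1) = C ∧
      Matrix.fromBlocks (ω • (1 : Matrix (Fin n) (Fin n) F) + A) 0 0
        (ω • (1 : Matrix (Fin n) (Fin n) F) - A) = B + C := by
  have hω0 : ω ≠ 0 := by
    rintro rfl
    rw [zero_pow (by omega)] at hω
    exact zero_ne_one hω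
  let b : Matrix (Fin n) (Fin n) F := (2 : F)⁻¹ • (1 + ω⁻¹ • A)
  refine ⟨_, _, (isIdempotentElem_fromBlocks 1 (by ring) b).smul_pow_succ hω,
    (isIdempotentElem_fromBlocks (-1) (by ring) b).smul_pow_succ hω, ?_⟩
  rw [← smul_add, fromBlocks_add, fromBlocks_smul]
  congr 1
  · simp only [b]
    match_scalars <;> field_simp <;> ring
  · simp
  · simp
  · simp only [b]
    match_scalars <;> field_simp <;> ring
end
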